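/- Let a, b, c, λ, Δt, θ be real numbers with λ > 0, Δt > 0 and 0 ≤ θ ≤ 1; set A = a + λc and l = 2a + b² + λc(2 + c), and assume 1 − θΔtA ≠ 0. On a probability space, for each n ∈ ℕ let Y_n and ΔW_n be real random variables and ΔN_n an ℕ-valued random variable such that: ΔW_n has law gaussianReal 0 Δt; ΔN_n has the Poisson distribution with parameter λΔt; the three random variables Y_n, ΔW_n, ΔN_n are mutually independent; E[Y_n²] < ∞; and almost surely (1 − θΔtA)·Y_{n+1} = (1 + (1 − θ)ΔtA)·Y_n + b·Y_n·ΔW_n + c·Y_n·(ΔN_n − λΔt) (the compensated stochastic θ-method applied to the linear test equation). Set ρ = (1 + (2(1 − θ)A + b² + λc²)Δt + (1 − θ)²A²Δt²)/(1 − θΔtA)². Then E[Y_{n+1}²] = ρ·E[Y_n²] for every n, hence E[Y_n²] = ρⁿ·E[Y_0²]; moreover ρ < 1 if and only if (1 − 2θ)A²Δt < −l. In particular, if l < 0 and 1/2 ≤ θ ≤ 1 then ρ < 1, so the compensated stochastic θ-method is mean-square stable for every step size. -/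

import Mathlib

open MeasureTheory ProbabilityTheory

/-!
The recursion says that `κ Y_{n+1} = Y_n G_n` almost surely, where `κ = 1 - θΔtA` and the random
factor `G_n = 1 + (1 - θ)ΔtA + b ΔW_n + c ΔM_n`, with `ΔM_n = ΔN_n - λΔt`, is independent of `Y_n`.
Hence `κ² E[Y_{n+1}²] = E[G_n²] E[Y_n²]`. Only the first two moments of the noise enter `E[G_n²]`:
`ΔW_n` and `ΔM_n` are centred and uncorrelated with variances `Δt` and `λΔt`, so
`E[G_n²] = (1 + (1 - θ)ΔtA)² + (b² + λc²)Δt`. With `v = b² + λc²`, so that `l = 2A + v`, the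
condition `E[G_n²] < κ²` is decided by the identity `E[G_n²] - κ² = Δt ((1 - 2θ)A²Δt + l)`.
-/

section LawFromFibers

variable {Ω : Type*} [MeasurableSpace Ω] {P : Measure Ω}

lemma nullMeasurableSet_of_measure_add_measure_compl_le [IsFiniteMeasure P] {s : Set Ω}
    (h : P s + P sᶜ ≤ P Set.univ) : NullMeasurableSet s P := by
  set core := (toMeasurable P sᶜ)ᶜ
  have core_subset : core ⊆ s := Set.compl_subset_comm.1 (subset_toMeasurable P sᶜ)
  have core_meas : MeasurableSet core := (measurableSet_toMeasurable P sᶜ).compl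
  have measure_le : P s ≤ P core := by
    rw [measure_compl (measurableSet_toMeasurable P sᶜ) (by finiteness),
      measure_toMeasurable]
    exact ENNReal.le_sub_of_add_le_right (by finiteness) h
  have core_ae_eq : core =ᵐ[P] s :=
    ae_eq_of_subset_of_measure_ge core_subset measure_le core_meas.nullMeasurableSet
      (by finiteness)
  exact core_meas.nullMeasurableSet.congr core_ae_eq

variable {α : Type*} [Countable α] [MeasurableSpace α] [MeasurableSingletonClass α]
  {ν : Measure α} {X : Ω → α}

lemma measure_preimage_le_of_measure_fiber_le (h : ∀ x, P (X ⁻¹' {x}) ≤ ν {x}) (s : Set α) :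
    P (X ⁻¹' s) ≤ ν s := by
  calc P (X ⁻¹' s) = P (⋃ x ∈ s, X ⁻¹' {x}) := by rw [Set.biUnion_preimage_singleton]
    _ ≤ ∑' x : s, P (X ⁻¹' {(x : α)}) := measure_biUnion_le P s.to_countable _
    _ ≤ ∑' x : s, ν {(x : α)} := ENNReal.tsum_le_tsum fun x => h x
    _ = ν s := tsum_measure_preimage_singleton (f := id) s.to_countable
        fun x _ => measurableSet_singleton x

/-- By subadditivity the outer measures of `X ⁻¹' s` and of its complement are at most `ν s` and
`ν sᶜ`, which add up to one; this forces `X ⁻¹' s` to be null-measurable. -/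
lemma hasLaw_of_measure_fiber_eq [IsProbabilityMeasure P] [IsProbabilityMeasure ν]
    (h : ∀ x, P (X ⁻¹' {x}) = ν {x}) : HasLaw X ν P := by
  have hle := measure_preimage_le_of_measure_fiber_le fun x => (h x).le
  have hX : AEMeasurable X P := by
    refine NullMeasurable.aemeasurable fun s hs =>
      nullMeasurableSet_of_measure_add_measure_compl_le ?_
    calc P (X ⁻¹' s) + P (X ⁻¹' s)ᶜ ≤ ν s + ν sᶜ := add_le_add (hle s) (hle sᶜ)
      _ = P Set.univ := by rw [measure_add_measure_compl hs, measure_univ, measure_univ]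
  refine ⟨hX, Measure.ext_of_singleton fun x => ?_⟩
  rw [Measure.map_apply_of_aemeasurable hX (measurableSet_singleton x), h x]

end LawFromFibers

section PoissonMoments

open scoped Nat NNReal

variable {r : ℝ≥0} {g : ℕ → ℝ}

lemma hasSum_poisson_natCast_mul {s : ℝ}
    (hg : HasSum (fun n => Real.exp (-r) * r ^ n / n ! * g (n + 1)) s) :
    HasSum (fun n => Real.exp (-r) * r ^ n / n ! * (n * g n)) (r * s) := by
  rw [← hasSum_nat_add_iff' 1]
  convert! hg.mul_left (r : ℝ) using 1
  · ext n
    rw [Nat.factorial_succ]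
    push_cast
    field_simp
    ring
  · simp

lemma integrable_natCast_mul_poissonMeasure
    (hg : Integrable (fun n => g (n + 1)) (poissonMeasure r)) :
    Integrable (fun n => n * g n) (poissonMeasure r) := by
  rw [integrable_poissonMeasure_iff] at hg ⊢
  simpa only [norm_mul, RCLike.norm_natCast] using
    (hasSum_poisson_natCast_mul (g := fun n => ‖g n‖) hg.hasSum).summable

/-- The Chen–Stein identity, which lowers the degree of polynomial moments. -/
lemma integral_natCast_mul_poissonMeasure
    (hg : Integrable (fun n => g (n + 1)) (poissonMeasure r)) :
    ∫ n, n * g n ∂poissonMeasure r = r * ∫ n, g (n + 1) ∂poissonMeasure r := by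
  rw [integral_poissonMeasure]
  exact (hasSum_poisson_natCast_mul (hasSum_integral_poissonMeasure hg)).tsum_eq

lemma integrable_natCast_poissonMeasure :
    Integrable (fun n : ℕ => (n : ℝ)) (poissonMeasure r) := by
  simpa using integrable_natCast_mul_poissonMeasure (r := r) (g := 1) (integrable_const 1)

lemma integral_natCast_poissonMeasure : ∫ n, (n : ℝ) ∂poissonMeasure r = r := by
  simpa using integral_natCast_mul_poissonMeasure (r := r) (g := 1) (integrable_const 1)

lemma integrable_natCast_add_one_poissonMeasure :
    Integrable (fun n : ℕ => ((n + 1 : ℕ) : ℝ)) (poissonMeasure r) := by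
  simpa using integrable_natCast_poissonMeasure.add (integrable_const (1 : ℝ))

lemma memLp_two_natCast_poissonMeasure :
    MemLp (fun n : ℕ => (n : ℝ)) 2 (poissonMeasure r) := by
  rw [memLp_two_iff_integrable_sq .of_discrete]
  simpa only [sq] using
    integrable_natCast_mul_poissonMeasure integrable_natCast_add_one_poissonMeasure

lemma variance_natCast_poissonMeasure : Var[fun n : ℕ => (n : ℝ); poissonMeasure r] = r := by
  have second_moment : ∫ n, (n : ℝ) * n ∂poissonMeasure r = r * (r + 1) := by
    rw [integral_natCast_mul_poissonMeasure integrable_natCast_add_one_poissonMeasure]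
    simp only [Nat.cast_add, Nat.cast_one]
    rw [integral_add integrable_natCast_poissonMeasure (integrable_const 1),
      integral_natCast_poissonMeasure, integral_const, probReal_univ, one_smul]
  rw [variance_eq_sub memLp_two_natCast_poissonMeasure, integral_natCast_poissonMeasure]
  simp only [Pi.pow_apply, sq, second_moment]
  ring

end PoissonMoments

section CenteredNoise

variable {Ω : Type*} [MeasurableSpace Ω] {P : Measure Ω}

/-- `X` is a square-integrable random variable with mean `0` and variance `v`. This is all that the
mean-square analysis of a one-step scheme needs to know about each driving increment. -/
structure IsCenteredNoise (X : Ω → ℝ) (v : ℝ) (P : Measure Ω) : Prop where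
  memLp : MemLp X 2 P
  integral_eq_zero : ∫ ω, X ω ∂P = 0
  variance_eq : Var[X; P] = v

lemma isCenteredNoise_comp_sub_integral {α : Type*} [MeasurableSpace α] {μ : Measure α}
    [IsProbabilityMeasure μ] {X : Ω → α} {f : α → ℝ} (hX : HasLaw X μ P) (hf : MemLp f 2 μ) :
    IsCenteredNoise (fun ω => f (X ω) - ∫ x, f x ∂μ) Var[f; μ] P := by
  have : IsProbabilityMeasure P := hX.isProbabilityMeasure
  have hfX : MemLp (fun ω => f (X ω)) 2 P := (hX.map_eq.symm ▸ hf).comp_of_map hX.aemeasurable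
  refine ⟨hfX.sub (memLp_const _), ?_, ?_⟩
  · rw [integral_sub (hfX.integrable one_le_two) (integrable_const _)]
    have mean_eq : ∫ ω, f (X ω) ∂P = ∫ x, f x ∂μ := hX.integral_comp hf.1
    simp [mean_eq]
  · rw [variance_sub_const hfX.1, ← hX.map_eq,
      variance_map (hX.map_eq.symm ▸ hf.1.aemeasurable) hX.aemeasurable]
    rfl

lemma isCenteredNoise_of_map_eq_gaussianReal {X : Ω → ℝ} {v : ℝ} (hv : 0 ≤ v)
    (hX : P.map X = gaussianReal 0 v.toNNReal) : IsCenteredNoise X v P := by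
  have X_law : HasLaw X (gaussianReal 0 v.toNNReal) P :=
    ⟨aemeasurable_of_map_neZero (by rw [hX]; infer_instance), hX⟩
  simpa [variance_id_gaussianReal, hv] using
    isCenteredNoise_comp_sub_integral X_law (memLp_id_gaussianReal' 2 (by norm_num))

lemma isCenteredNoise_natCast_sub_of_poisson_fibers [IsProbabilityMeasure P] {N : Ω → ℕ} {r : ℝ}
    (hr : 0 ≤ r) (hN : ∀ k : ℕ, P {ω | N ω = k}
      = ENNReal.ofReal (Real.exp (-r) * r ^ k / (Nat.factorial k))) :
    IsCenteredNoise (fun ω => (N ω : ℝ) - r) r P := by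
  lift r to NNReal using hr
  have N_law : HasLaw N (poissonMeasure r) P := hasLaw_of_measure_fiber_eq fun k =>
    (hN k).trans (poissonMeasure_singleton r k).symm
  simpa only [integral_natCast_poissonMeasure, variance_natCast_poissonMeasure] using
    isCenteredNoise_comp_sub_integral N_law memLp_two_natCast_poissonMeasure

namespace IsCenteredNoise

lemma linear_combination [IsFiniteMeasure P] {W M : Ω → ℝ} {σ τ : ℝ} (hW : IsCenteredNoise W σ P)
    (hM : IsCenteredNoise M τ P) (hWM : cov[W, M; P] = 0) (b c : ℝ) :
    IsCenteredNoise (fun ω => b * W ω + c * M ω) (b ^ 2 * σ + c ^ 2 * τ) P := by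
  have hbW : MemLp (fun ω => b * W ω) 2 P := hW.memLp.const_mul b
  have hcM : MemLp (fun ω => c * M ω) 2 P := hM.memLp.const_mul c
  refine ⟨hbW.add hcM, ?_, ?_⟩
  · rw [integral_add (hbW.integrable one_le_two) (hcM.integrable one_le_two), integral_const_mul,
      integral_const_mul, hW.integral_eq_zero, hM.integral_eq_zero, mul_zero, mul_zero, add_zero]
  · rw [variance_fun_add hbW hcM, variance_const_mul, variance_const_mul,
      covariance_const_mul_left, covariance_const_mul_right, hWM, hW.variance_eq, hM.variance_eq]
    ring

variable [IsProbabilityMeasure P] {Z : Ω → ℝ} {v : ℝ}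

lemma integral_const_add_sq (hZ : IsCenteredNoise Z v P) (α : ℝ) :
    ∫ ω, (α + Z ω) ^ 2 ∂P = α ^ 2 + v := by
  have mean_eq : ∫ ω, (α + Z ω) ∂P = α := by
    rw [integral_add (integrable_const α) (hZ.memLp.integrable one_le_two), hZ.integral_eq_zero,
      integral_const, probReal_univ, one_smul, add_zero]
  have variance_eq := variance_eq_sub ((memLp_const α).add hZ.memLp)
  rw [Pi.add_def, variance_const_add hZ.memLp.1, hZ.variance_eq, mean_eq] at variance_eq
  exact sub_eq_iff_eq_add'.1 variance_eq.symm

end IsCenteredNoise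

end CenteredNoise

section IndependentFactor

variable {Ω : Type*} [MeasurableSpace Ω] {P : Measure Ω} {Y Y' G : Ω → ℝ} {κ : ℝ}

lemma sq_ae_eq_of_mul_ae_eq (hκ : κ ≠ 0) (hstep : ∀ᵐ ω ∂P, κ * Y' ω = Y ω * G ω) :
    (fun ω => Y' ω ^ 2) =ᵐ[P] fun ω => (Y ω ^ 2 * G ω ^ 2) / κ ^ 2 := by
  filter_upwards [hstep] with ω hω
  rw [eq_div_iff (pow_ne_zero 2 hκ), ← mul_pow, ← mul_pow, ← hω, mul_comm]

lemma indepFun_sq (hYG : IndepFun Y G P) :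
    IndepFun (fun ω => Y ω ^ 2) (fun ω => G ω ^ 2) P :=
  hYG.comp (measurable_id.pow_const 2) (measurable_id.pow_const 2)

lemma integrable_sq_of_mul_ae_eq (hκ : κ ≠ 0) (hstep : ∀ᵐ ω ∂P, κ * Y' ω = Y ω * G ω)
    (hYG : IndepFun Y G P) (hY : Integrable (fun ω => Y ω ^ 2) P)
    (hG : Integrable (fun ω => G ω ^ 2) P) : Integrable (fun ω => Y' ω ^ 2) P :=
  (((indepFun_sq hYG).integrable_mul hY hG).div_const (κ ^ 2)).congr
    (sq_ae_eq_of_mul_ae_eq hκ hstep).symm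

lemma integral_sq_of_mul_ae_eq (hκ : κ ≠ 0) (hstep : ∀ᵐ ω ∂P, κ * Y' ω = Y ω * G ω)
    (hYG : IndepFun Y G P) (hY : AEStronglyMeasurable (fun ω => Y ω ^ 2) P)
    (hG : AEStronglyMeasurable (fun ω => G ω ^ 2) P) :
    ∫ ω, Y' ω ^ 2 ∂P = (∫ ω, G ω ^ 2 ∂P) / κ ^ 2 * ∫ ω, Y ω ^ 2 ∂P := by
  rw [integral_congr_ae (sq_ae_eq_of_mul_ae_eq hκ hstep), integral_div,
    (indepFun_sq hYG).integral_fun_mul_eq_mul_integral hY hG]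
  ring

end IndependentFactor

section Amplification

variable {A v θ Δt : ℝ}

/-- The mean-square amplification factor of the compensated stochastic θ-method, where `A` is the
drift of the compensated equation and `v` is its total squared noise intensity (`b² + λc²`). -/
noncomputable def cstmAmplification (A v θ Δt : ℝ) : ℝ :=
  ((1 + (1 - θ) * Δt * A) ^ 2 + v * Δt) / (1 - θ * Δt * A) ^ 2

lemma cstmAmplification_lt_one_iff (hΔt : 0 < Δt) (hκ : 1 - θ * Δt * A ≠ 0) :
    cstmAmplification A v θ Δt < 1 ↔ (1 - 2 * θ) * A ^ 2 * Δt < -(2 * A + v) := by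
  have num_sub_denom : (1 + (1 - θ) * Δt * A) ^ 2 + v * Δt - (1 - θ * Δt * A) ^ 2
      = Δt * ((1 - 2 * θ) * A ^ 2 * Δt + (2 * A + v)) := by ring
  rw [cstmAmplification, div_lt_one (by positivity), ← sub_neg, num_sub_denom,
    ← mul_zero Δt, mul_lt_mul_iff_right₀ hΔt, lt_neg_iff_add_neg]

lemma cstmAmplification_lt_one (hΔt : 0 < Δt) (hκ : 1 - θ * Δt * A ≠ 0) (hθ : 1 / 2 ≤ θ)
    (hl : 2 * A + v < 0) : cstmAmplification A v θ Δt < 1 := by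
  have lhs_nonpos : (1 - 2 * θ) * A ^ 2 * Δt ≤ 0 :=
    mul_nonpos_of_nonpos_of_nonneg
      (mul_nonpos_of_nonpos_of_nonneg (by linarith) (sq_nonneg A)) hΔt.le
  exact (cstmAmplification_lt_one_iff hΔt hκ).2 (by linarith)

end Amplification

section Recursion

variable {Ω : Type*} [MeasurableSpace Ω] {P : Measure Ω} [IsProbabilityMeasure P]
  {A b c lam θ Δt : ℝ} {Y Y' W M : Ω → ℝ}

lemma cstm_step_second_moment (hκ : 1 - θ * Δt * A ≠ 0)
    (hW : IsCenteredNoise W Δt P) (hM : IsCenteredNoise M (lam * Δt) P)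
    (hWM : cov[W, M; P] = 0) (hYWM : IndepFun Y (fun ω => (W ω, M ω)) P)
    (hY : Integrable (fun ω => Y ω ^ 2) P)
    (hrec : ∀ᵐ ω ∂P, (1 - θ * Δt * A) * Y' ω
      = (1 + (1 - θ) * Δt * A) * Y ω + b * Y ω * W ω + c * Y ω * M ω) :
    Integrable (fun ω => Y' ω ^ 2) P ∧
      ∫ ω, Y' ω ^ 2 ∂P = cstmAmplification A (b ^ 2 + lam * c ^ 2) θ Δt * ∫ ω, Y ω ^ 2 ∂P := by
  have noise := hW.linear_combination hM hWM b c
  set G : Ω → ℝ := fun ω => 1 + (1 - θ) * Δt * A + (b * W ω + c * M ω) with hG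
  have G_sq_int : Integrable (fun ω => G ω ^ 2) P :=
    ((memLp_const (1 + (1 - θ) * Δt * A)).add noise.memLp).integrable_sq
  have Y_indep_G : IndepFun Y G P :=
    hYWM.comp (ψ := fun p : ℝ × ℝ => 1 + (1 - θ) * Δt * A + (b * p.1 + c * p.2))
      measurable_id (by fun_prop)
  have hstep : ∀ᵐ ω ∂P, (1 - θ * Δt * A) * Y' ω = Y ω * G ω := by
    filter_upwards [hrec] with ω hω
    rw [hω, hG]
    ring
  refine ⟨integrable_sq_of_mul_ae_eq hκ hstep Y_indep_G hY G_sq_int, ?_⟩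
  rw [integral_sq_of_mul_ae_eq hκ hstep Y_indep_G hY.1 G_sq_int.1, hG,
    noise.integral_const_add_sq, cstmAmplification]
  ring

end Recursion

theorem cstm_linear_mean_square_stability_general
    {a b c lam Δt θ A l : ℝ} (hΔt : 0 < Δt)
    (hA : A = a + lam * c) (hl : l = 2 * a + b ^ 2 + lam * c * (2 + c))
    (hdenom : 1 - θ * Δt * A ≠ 0)
    {Ω : Type*} [MeasurableSpace Ω] {P : Measure Ω} [IsProbabilityMeasure P]
    {Y W M : ℕ → Ω → ℝ}
    (hW : ∀ n, IsCenteredNoise (W n) Δt P) (hM : ∀ n, IsCenteredNoise (M n) (lam * Δt) P)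
    (hWM : ∀ n, cov[W n, M n; P] = 0)
    (hYWM : ∀ n, IndepFun (Y n) (fun ω => (W n ω, M n ω)) P)
    (hint : Integrable (fun ω => (Y 0 ω) ^ 2) P)
    (hrec : ∀ n, ∀ᵐ ω ∂P,
      (1 - θ * Δt * A) * Y (n + 1) ω
        = (1 + (1 - θ) * Δt * A) * Y n ω + b * Y n ω * W n ω + c * Y n ω * M n ω)
    {ρ : ℝ}
    (hρ : ρ = (1 + (2 * (1 - θ) * A + b ^ 2 + lam * c ^ 2) * Δt
        + (1 - θ) ^ 2 * A ^ 2 * Δt ^ 2) / (1 - θ * Δt * A) ^ 2) :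
    (∀ n, (∫ ω, (Y (n + 1) ω) ^ 2 ∂P) = ρ * ∫ ω, (Y n ω) ^ 2 ∂P) ∧
    (∀ n, (∫ ω, (Y n ω) ^ 2 ∂P) = ρ ^ n * ∫ ω, (Y 0 ω) ^ 2 ∂P) ∧
    (ρ < 1 ↔ (1 - 2 * θ) * A ^ 2 * Δt < -l) ∧
    (l < 0 → 1 / 2 ≤ θ → ρ < 1) := by
  obtain rfl : ρ = cstmAmplification A (b ^ 2 + lam * c ^ 2) θ Δt := by
    rw [hρ, cstmAmplification]; ring
  obtain rfl : l = 2 * A + (b ^ 2 + lam * c ^ 2) := by rw [hl, hA]; ring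
  have step n (hn : Integrable (fun ω => Y n ω ^ 2) P) :=
    cstm_step_second_moment hdenom (hW n) (hM n) (hWM n) (hYWM n) hn (hrec n)
  have sq_int (n : ℕ) : Integrable (fun ω => Y n ω ^ 2) P :=
    Nat.rec hint (fun k hk => (step k hk).1) n
  have one_step n := (step n (sq_int n)).2
  refine ⟨one_step, fun n => ?_, cstmAmplification_lt_one_iff hΔt hdenom,
    fun hneg hθ => cstmAmplification_lt_one hΔt hdenom hθ hneg⟩
  induction n with
  | zero => simp
  | succ k ih => rw [one_step, ih, pow_succ']; ring

/-- Mean-square stability of the compensated stochastic θ-method for the linear jump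
test equation: with `A = a + λc`, `l = 2a + b² + λc(2+c)` and
`ρ = (1 + (2(1-θ)A + b² + λc²)Δt + (1-θ)²A²Δt²)/(1 - θΔtA)²`, one has
`E[Y_{n+1}²] = ρ E[Y_n²]`, hence `E[Y_n²] = ρⁿ E[Y_0²]`; moreover `ρ < 1` iff
`(1-2θ)A²Δt < -l`; in particular if `l < 0` and `1/2 ≤ θ ≤ 1` then `ρ < 1`. -/
theorem cstm_linear_mean_square_stability
    (a b c lam Δt θ : ℝ) (hlam : 0 < lam) (hΔt : 0 < Δt) (hθ0 : 0 ≤ θ) (hθ1 : θ ≤ 1)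
    (A l : ℝ) (hA : A = a + lam * c) (hl : l = 2 * a + b ^ 2 + lam * c * (2 + c))
    (hdenom : 1 - θ * Δt * A ≠ 0)
    {Ω : Type*} [MeasurableSpace Ω] (P : Measure Ω) [IsProbabilityMeasure P]
    (Y W : ℕ → Ω → ℝ) (N : ℕ → Ω → ℕ)
    (hWlaw : ∀ n, Measure.map (W n) P = gaussianReal 0 (Real.toNNReal Δt))
    (hNlaw : ∀ n (k : ℕ), P {ω | N n ω = k}
      = ENNReal.ofReal (Real.exp (-(lam * Δt)) * (lam * Δt) ^ k / (Nat.factorial k)))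
    (hWN : ∀ n, IndepFun (W n) (N n) P)
    (hYWN : ∀ n, IndepFun (Y n) (fun ω => (W n ω, N n ω)) P)
    (hint : ∀ n, Integrable (fun ω => (Y n ω) ^ 2) P)
    (hrec : ∀ n, ∀ᵐ ω ∂P,
      (1 - θ * Δt * A) * Y (n + 1) ω
        = (1 + (1 - θ) * Δt * A) * Y n ω + b * Y n ω * W n ω
          + c * Y n ω * ((N n ω : ℝ) - lam * Δt))
    (ρ : ℝ)
    (hρ : ρ = (1 + (2 * (1 - θ) * A + b ^ 2 + lam * c ^ 2) * Δt
        + (1 - θ) ^ 2 * A ^ 2 * Δt ^ 2) / (1 - θ * Δt * A) ^ 2) :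
    (∀ n, (∫ ω, (Y (n + 1) ω) ^ 2 ∂P) = ρ * ∫ ω, (Y n ω) ^ 2 ∂P) ∧
    (∀ n, (∫ ω, (Y n ω) ^ 2 ∂P) = ρ ^ n * ∫ ω, (Y 0 ω) ^ 2 ∂P) ∧
    (ρ < 1 ↔ (1 - 2 * θ) * A ^ 2 * Δt < -l) ∧
    (l < 0 → 1 / 2 ≤ θ → ρ < 1) := by
  have hW n := isCenteredNoise_of_map_eq_gaussianReal hΔt.le (hWlaw n)
  have hM n := isCenteredNoise_natCast_sub_of_poisson_fibers (by positivity) (hNlaw n)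
  have compensate_measurable : Measurable fun k : ℕ => (k : ℝ) - lam * Δt := .of_discrete
  have uncorrelated n :=
    ((hWN n).comp measurable_id compensate_measurable).covariance_eq_zero (hW n).memLp (hM n).memLp
  have Y_indep n := (hYWN n).comp measurable_id (measurable_id.prodMap compensate_measurable)
  exact cstm_linear_mean_square_stability_general hΔt hA hl hdenom hW hM uncorrelated Y_indep
    (hint 0) hrec hρ
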